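/- For every integer d ≥ 1 and every real m ∈ [0, 1], it holds that 0 ≤ 1 − g_d(m) ≤ (1 − m)^{p_d}, where the exponentiation is the real power with exponent p_d. -/

import Mathlib

noncomputable def g (d : ℕ) : ℝ → ℝ :=
  fun m => ∑ i ∈ Finset.range (d + 1),
    (1 / 4 ^ i : ℝ) * (Nat.choose (2 * i) i) * (m * (1 - m ^ 2) ^ i)

noncomputable def p (d : ℕ) : ℝ :=
  ∑ i ∈ Finset.range (d + 1), (1 / 4 ^ i : ℝ) * (Nat.choose (2 * i) i)

noncomputable def cc (i : ℕ) : ℝ := (1 / 4 ^ i : ℝ) * (Nat.choose (2 * i) i)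

lemma cc_succ (d : ℕ) : (2 * d + 2) * cc (d + 1) = (2 * d + 1) * cc d := by
  have h := Nat.succ_mul_centralBinom_succ d
  simp only [Nat.centralBinom] at h
  have h' : ((d : ℝ) + 1) * (Nat.choose (2 * (d + 1)) (d + 1) : ℝ)
      = 2 * (2 * d + 1) * (Nat.choose (2 * d) d : ℝ) := by exact_mod_cast h
  unfold cc
  have h4 : (4 : ℝ) ^ d ≠ 0 := by positivity
  rw [pow_succ]
  field_simp
  linarith

lemma p_succ (d : ℕ) : p (d + 1) = p d + cc (d + 1) := by
  unfold p cc
  rw [Finset.sum_range_succ]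

lemma p_eq (d : ℕ) : p d = (2 * d + 1) * cc d := by
  induction d with
  | zero => simp [p, cc]
  | succ d ih =>
    rw [p_succ, ih, ← cc_succ]
    push_cast
    ring

lemma cc_nonneg (d : ℕ) : 0 ≤ cc d := by unfold cc; positivity

lemma p_ge (d : ℕ) : 1 ≤ p d := by
  induction d with
  | zero => simp [p]
  | succ d ih => rw [p_succ]; linarith [cc_nonneg (d + 1)]

lemma cc_le (d : ℕ) : cc d ≤ 1 := by
  induction d with
  | zero => simp [cc]
  | succ d ih =>
    have h := cc_succ d
    have h1 := cc_nonneg (d + 1)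
    have hd : (0 : ℝ) ≤ d := Nat.cast_nonneg d
    by_contra hc
    push Not at hc
    nlinarith

lemma p_le (d : ℕ) : p d ≤ d + 1 := by
  induction d with
  | zero => simp [p]
  | succ d ih => rw [p_succ]; push_cast; linarith [cc_le (d + 1)]

lemma g_deriv (d : ℕ) (x : ℝ) : HasDerivAt (g d) (p d * (1 - x ^ 2) ^ d) x := by
  induction d with
  | zero =>
    have : g 0 = fun m => m := by funext m; simp [g]
    rw [this]
    simpa [p] using hasDerivAt_id' x
  | succ d ih =>
    have e : g (d + 1) = fun m => g d m + cc (d + 1) * (m * (1 - m ^ 2) ^ (d + 1)) := by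
      funext m
      unfold g cc
      rw [Finset.sum_range_succ]
    rw [e]
    have h1 : HasDerivAt (fun m : ℝ => 1 - m ^ 2) (-(2 * x)) x := by
      simpa using (hasDerivAt_pow 2 x).const_sub 1
    have h2 := ih.add (((hasDerivAt_id' x).mul (h1.pow (d + 1))).const_mul (cc (d + 1)))
    refine h2.congr_deriv ?_
    rw [p_succ, p_eq d, ← cc_succ]
    simp
    ring

lemma g_zero (d : ℕ) : g d 0 = 0 := by simp [g]

lemma g_one (d : ℕ) : g d 1 = 1 := by
  induction d with
  | zero => simp [g]
  | succ d ih =>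
    unfold g at *
    rw [Finset.sum_range_succ, ih]
    simp

lemma key (d : ℕ) (m : ℝ) (h0 : 0 ≤ m) (h1 : m ≤ 1) :
    1 - g (d + 1) m ≤ (1 - m) * (1 - m ^ 2) ^ (d + 1) := by
  set K : ℝ → ℝ := fun x => 1 - g (d + 1) x - (1 - x) * (1 - x ^ 2) ^ (d + 1) with hK
  set B : ℝ → ℝ := fun x => (d + 2 - p (d + 1)) * (1 + x) - (d + 1) * (1 - x) with hB
  have hder : ∀ x, HasDerivAt K ((1 - x) * (1 - x ^ 2) ^ d * B x) x := by
    intro x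
    have a1 : HasDerivAt (fun m : ℝ => 1 - m ^ 2) (-(2 * x)) x := by
      simpa using (hasDerivAt_pow 2 x).const_sub 1
    have a2 := ((g_deriv (d + 1) x).const_sub 1).sub
      (((hasDerivAt_id' x).const_sub 1).mul (a1.pow (d + 1)))
    refine a2.congr_deriv ?_
    simp [hB]
    ring
  have hcont : Continuous K := continuous_iff_continuousAt.2 fun x => (hder x).continuousAt
  have hp := p_le (d + 1)
  push_cast at hp
  have hd : (0 : ℝ) ≤ d := Nat.cast_nonneg d
  have hBm : Monotone B := by
    intro x y hxy
    simp only [hB]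
    nlinarith
  have hpos : ∀ x : ℝ, 0 ≤ x → x ≤ 1 → 0 ≤ (1 - x) * (1 - x ^ 2) ^ d := by
    intro x hx hx1
    have : 0 ≤ 1 - x ^ 2 := by nlinarith
    have : 0 ≤ 1 - x := by linarith
    positivity
  have hK0 : K 0 = 0 := by simp [hK, g_zero]
  have hK1 : K 1 = 0 := by simp [hK, g_one]
  suffices K m ≤ 0 by simp only [hK] at this; linarith
  rcases le_total (B m) 0 with hb | hb
  · have : AntitoneOn K (Set.Icc 0 m) := by
      refine antitoneOn_of_deriv_nonpos (convex_Icc _ _) hcont.continuousOn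
        (fun x _ => (hder x).differentiableAt.differentiableWithinAt) ?_
      intro x hx
      rw [interior_Icc] at hx
      rw [(hder x).deriv]
      exact mul_nonpos_of_nonneg_of_nonpos (hpos x hx.1.le (hx.2.le.trans h1))
        ((hBm hx.2.le).trans hb)
    have := this (Set.left_mem_Icc.2 h0) (Set.right_mem_Icc.2 h0) h0
    linarith
  · have : MonotoneOn K (Set.Icc m 1) := by
      refine monotoneOn_of_deriv_nonneg (convex_Icc _ _) hcont.continuousOn
        (fun x _ => (hder x).differentiableAt.differentiableWithinAt) ?_
      intro x hx
      rw [interior_Icc] at hx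
      rw [(hder x).deriv]
      exact mul_nonneg (hpos x (h0.trans hx.1.le) hx.2.le) (hb.trans (hBm hx.1.le))
    have := this (Set.left_mem_Icc.2 h1) (Set.right_mem_Icc.2 h1) h1
    linarith

theorem stmt_3 (d : ℕ) (hd : 1 ≤ d) (m : ℝ) (hm : m ∈ Set.Icc (0 : ℝ) 1) :
    0 ≤ 1 - g d m ∧ 1 - g d m ≤ (1 - m) ^ (p d) := by
  obtain ⟨h0, h1⟩ := hm
  have hp := p_ge d
  constructor
  · have : MonotoneOn (g d) (Set.Icc 0 1) := by
      refine monotoneOn_of_deriv_nonneg (convex_Icc _ _)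
        (fun x _ => (g_deriv d x).continuousAt.continuousWithinAt)
        (fun x _ => (g_deriv d x).differentiableAt.differentiableWithinAt) ?_
      intro x hx
      rw [interior_Icc] at hx
      rw [(g_deriv d x).deriv]
      have : 0 ≤ 1 - x ^ 2 := by nlinarith [hx.1, hx.2]
      positivity
    have := this ⟨h0, h1⟩ ⟨zero_le_one, le_refl _⟩ h1
    rw [g_one] at this
    linarith
  · rcases h1.eq_or_lt with rfl | hlt
    · rw [g_one, sub_self, Real.zero_rpow (by linarith)]
    obtain ⟨n, rfl⟩ : ∃ n, d = n + 1 := ⟨d - 1, by omega⟩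
    set R : ℝ → ℝ := fun x => (1 - g (n + 1) x) * (1 - x) ^ (-p (n + 1)) with hR
    have hder : ∀ x < 1, HasDerivAt R (p (n + 1) * (1 - x) ^ (-p (n + 1) - 1) *
        (1 - g (n + 1) x - (1 - x) * (1 - x ^ 2) ^ (n + 1))) x := by
      intro x hx
      have hx' : 0 < 1 - x := by linarith
      have a := ((g_deriv (n + 1) x).const_sub 1).mul
        (((hasDerivAt_id' x).const_sub 1).rpow_const (p := -p (n + 1)) (Or.inl hx'.ne'))
      refine a.congr_deriv ?_
      have e : (1 - x) ^ (-p (n + 1)) = (1 - x) ^ (-p (n + 1) - 1) * (1 - x) := by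
        rw [← Real.rpow_add_one hx'.ne']; congr 1; ring
      rw [e]
      ring
    have : AntitoneOn R (Set.Icc 0 m) := by
      refine antitoneOn_of_deriv_nonpos (convex_Icc _ _)
        (fun x hx => (hder x (hx.2.trans_lt hlt)).continuousAt.continuousWithinAt)
        (fun x hx => (hder x ((interior_subset hx).2.trans_lt hlt)).differentiableAt.differentiableWithinAt) ?_
      intro x hx
      have hx := interior_subset hx
      have hx1 := hx.2.trans_lt hlt
      rw [(hder x hx1).deriv]
      have hx' : 0 < 1 - x := by linarith
      refine mul_nonpos_of_nonneg_of_nonpos (by positivity) ?_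
      linarith [key n x hx.1 hx1.le]
    have := this (Set.left_mem_Icc.2 h0) (Set.right_mem_Icc.2 h0) h0
    have hm' : 0 < 1 - m := by linarith
    simp only [hR, g_zero, sub_zero, Real.one_rpow, mul_one] at this
    rw [Real.rpow_neg hm'.le, ← div_eq_mul_inv, div_le_one (by positivity)] at this
    exact this
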